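/- Let A be a simply-laced Cartan matrix of finite type (a_{ij} ∈ {0, −1} for i ≠ j), let w be a Weyl group element and ι = (i_1,…,i_k) a reduced word for w. Then for any finite sequence of 2-moves and 3-moves that transforms ι back into ι itself, the composition of the associated piecewise-linear maps is the identity map of ℤ^k. -/

import Mathlib

/-!
STATEMENT 15: Let A be a simply-laced Cartan matrix of finite type, w a Weyl group
element and ι a reduced word for w. Then for any finite sequence of 2-moves and
3-moves that transforms ι back into ι itself, the composition of the associated
piecewise-linear maps is the identity map of ℤ^k.
-/
/-- The simple reflection `s_i` of the Cartan matrix `a`, acting on the root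
lattice (tensored with `ℚ`), `s_i(α_j) = α_j - a_{ij} α_i`. -/
def sRefl {n : ℕ} (a : Fin n → Fin n → ℤ) (i : Fin n) : (Fin n → ℚ) → (Fin n → ℚ) :=
  fun v => v - (∑ j, (a i j : ℚ) * v j) • (Pi.single i 1 : Fin n → ℚ)

/-- The product `s_{i_1} s_{i_2} ⋯ s_{i_k}` of simple reflections along a word. -/
def wProd {n : ℕ} (a : Fin n → Fin n → ℤ) (l : List (Fin n)) : (Fin n → ℚ) → (Fin n → ℚ) :=
  (l.map (sRefl a)).foldr (· ∘ ·) id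

/-- An `n×n` Cartan matrix of a finite-dimensional complex simple Lie algebra:
an indecomposable generalized Cartan matrix whose Weyl group is finite. -/
structure SimpleCartanMatrix (n : ℕ) where
  a : Fin n → Fin n → ℤ
  npos : 0 < n
  diag : ∀ i, a i i = 2
  offdiag_nonpos : ∀ i j, i ≠ j → a i j ≤ 0
  zero_symm : ∀ i j, a i j = 0 → a j i = 0
  indecomposable : ∀ S : Set (Fin n), (∀ i ∈ S, ∀ j, j ∉ S → a i j = 0) → S = ∅ ∨ S = Set.univ
  finiteWeyl : Set.Finite {w : (Fin n → ℚ) → (Fin n → ℚ) | ∃ l : List (Fin n), w = wProd a l}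

/-- A word is reduced if it has minimal length among all words representing the
same Weyl group element. -/
def IsReducedList {n : ℕ} (a : Fin n → Fin n → ℤ) (l : List (Fin n)) : Prop :=
  ∀ l' : List (Fin n), wProd a l' = wProd a l → l.length ≤ l'.length

/-- A 2-move or a 3-move, at a given position. -/
inductive BMove where
  | two (p : ℕ)
  | three (p : ℕ)

/-- The action of a move on words: a 2-move at `p` swaps the letters at
positions `p, p+1`; a 3-move at `p` turns the letters `(i,j,i)` at positions
`p, p+1, p+2` into `(j,i,j)`. -/
def moveWord {n k : ℕ} (w : Fin k → Fin n) : BMove → (Fin k → Fin n)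
  | .two p => fun q =>
      if h1 : (q : ℕ) = p ∧ p + 1 < k then w ⟨p + 1, h1.2⟩
      else if h2 : (q : ℕ) = p + 1 ∧ p < k then w ⟨p, h2.2⟩
      else w q
  | .three p => fun q =>
      if h1 : (q : ℕ) = p ∧ p + 1 < k then w ⟨p + 1, h1.2⟩
      else if h2 : (q : ℕ) = p + 1 ∧ p < k then w ⟨p, h2.2⟩
      else if h3 : (q : ℕ) = p + 2 ∧ p + 1 < k then w ⟨p + 1, h3.2⟩
      else w q

/-- The piecewise-linear map on `ℤ^k` associated with a move: a 2-move at `p`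
swaps the coordinates at positions `p, p+1`; a 3-move at `p` sends the
coordinates `(x,y,z)` at positions `p, p+1, p+2` to
`(max(z, y−x), x+z, min(x, y−z))`. -/
def moveZ {k : ℕ} (x : Fin k → ℤ) : BMove → (Fin k → ℤ)
  | .two p => fun q =>
      if h1 : (q : ℕ) = p ∧ p + 1 < k then x ⟨p + 1, h1.2⟩
      else if h2 : (q : ℕ) = p + 1 ∧ p < k then x ⟨p, h2.2⟩
      else x q
  | .three p =>
      if h : p + 2 < k then
        fun q =>
          if (q : ℕ) = p then
            max (x ⟨p + 2, h⟩) (x ⟨p + 1, by omega⟩ - x ⟨p, by omega⟩)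
          else if (q : ℕ) = p + 1 then x ⟨p, by omega⟩ + x ⟨p + 2, h⟩
          else if (q : ℕ) = p + 2 then
            min (x ⟨p, by omega⟩) (x ⟨p + 1, by omega⟩ - x ⟨p + 2, h⟩)
          else x q
      else x

/-- Applicability of a move to a word: a 2-move at `p` requires letters `i,j` at
positions `p, p+1` with `a_{ij} = a_{ji} = 0`; a 3-move at `p` requires letters
`(i,j,i)` at positions `p, p+1, p+2` with `a_{ij} = a_{ji} = -1`. -/
def ValidMove {n k : ℕ} (a : Fin n → Fin n → ℤ) (w : Fin k → Fin n) : BMove → Prop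
  | .two p => ∃ h : p + 1 < k,
      a (w ⟨p, by omega⟩) (w ⟨p + 1, h⟩) = 0 ∧ a (w ⟨p + 1, h⟩) (w ⟨p, by omega⟩) = 0
  | .three p => ∃ h : p + 2 < k,
      w ⟨p, by omega⟩ = w ⟨p + 2, h⟩ ∧
      a (w ⟨p, by omega⟩) (w ⟨p + 1, by omega⟩) = -1 ∧
      a (w ⟨p + 1, by omega⟩) (w ⟨p, by omega⟩) = -1

/-- A sequence of moves, each applicable to the word obtained so far. -/
inductive ValidSeq {n k : ℕ} (a : Fin n → Fin n → ℤ) :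
    (Fin k → Fin n) → List BMove → Prop
  | nil (w : Fin k → Fin n) : ValidSeq a w []
  | cons (w : Fin k → Fin n) (m : BMove) (ms : List BMove) :
      ValidMove a w m → ValidSeq a (moveWord w m) ms → ValidSeq a w (m :: ms)

/-- The word obtained after applying a sequence of moves. -/
def wordAfter {n k : ℕ} (w : Fin k → Fin n) (ms : List BMove) : Fin k → Fin n :=
  ms.foldl moveWord w

/-- The composition of the piecewise-linear maps associated with a sequence of
moves, applied to `x ∈ ℤ^k`. -/
def zAfter {k : ℕ} (x : Fin k → ℤ) (ms : List BMove) : Fin k → ℤ :=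
  ms.foldl moveZ x

/-!
Let every letter of a reduced word carry a label, transformed by the moves as prescribed. The claim
is that labelled reduced words connected by moves and having the same letters have the same labels;
this is proved by induction on the length. By induction and Matsumoto's theorem, the moves of a
sequence that touch the first letter, turning `i` into `j`, have a result depending only on the
starting point, up to moves that leave the first letter alone. It remains to see that the passages
`i → j → m` and `i → m` have the same result. All three letters are then left descents of the
element, which therefore begins with the longest element of the rank three parabolic subgroup they
generate. In types `A₁³` and `A₁ × A₂` the two passages agree for trivial reasons; in type `A₃` they
agree because the piecewise-linear map solves the tetrahedron equation, so one reduced word of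
length six suffices; the affine type `Ã₂` does not occur, since three letters of a triangle are
never left descents of one element. Thus a sequence of moves that returns to its first letter may be
replaced by one that never touches it.
-/

/-! ### Descents and reduced words in simply-laced Coxeter systems -/

section Roots

variable {B W V : Type*} [Group W] {M : CoxeterMatrix B} {cs : CoxeterSystem M W}

theorem coxeterMatrix_ne_of_eq {i j : B} {m : ℕ} (h : M i j = m) (hm : m ≠ 1) : i ≠ j := by
  rintro rfl
  exact hm (h ▸ M.diagonal i)

theorem simple_mul_comm_of_two (cs : CoxeterSystem M W) {i j : B} (h : M i j = 2) :
    cs.simple i * cs.simple j = cs.simple j * cs.simple i := by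
  have hsq : cs.simple i * cs.simple j * (cs.simple i * cs.simple j) = 1 := by
    rw [← pow_two, ← h, cs.simple_mul_simple_pow]
  simpa only [mul_inv_rev, cs.inv_simple] using eq_inv_of_mul_eq_one_left hsq

theorem simple_braid_of_three (cs : CoxeterSystem M W) {i j : B} (h : M i j = 3) :
    cs.simple i * cs.simple j * cs.simple i = cs.simple j * cs.simple i * cs.simple j := by
  have hpow : cs.simple i * cs.simple j * cs.simple i *
      (cs.simple j * cs.simple i * cs.simple j) = 1 := by
    simpa only [h, pow_succ, pow_zero, one_mul, mul_assoc] using cs.simple_mul_simple_pow i j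
  simpa only [mul_inv_rev, cs.inv_simple, mul_assoc] using eq_inv_of_mul_eq_one_left hpow

theorem isLeftDescent_of_isReduced_cons {i : B} {l : List B} (h : cs.IsReduced (i :: l)) :
    cs.IsLeftDescent (cs.wordProd (i :: l)) i := by
  rw [CoxeterSystem.IsLeftDescent, h.eq, cs.wordProd_cons, cs.simple_mul_simple_cancel_left]
  exact Nat.lt_succ_of_le (cs.length_wordProd_le l)

/-- The element `w` has a reduced word beginning with `c`. -/
def HasReducedPrefix (cs : CoxeterSystem M W) (c : List B) (w : W) : Prop :=
  ∃ r, cs.IsReduced (c ++ r) ∧ cs.wordProd (c ++ r) = w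

theorem HasReducedPrefix.cons {i : B} {c : List B} {w : W} (hi : cs.IsLeftDescent w i)
    (h : HasReducedPrefix cs c (cs.simple i * w)) : HasReducedPrefix cs (i :: c) w := by
  obtain ⟨r, hr, hw⟩ := h
  have hprod : cs.wordProd (i :: c ++ r) = w := by
    rw [List.cons_append, cs.wordProd_cons, hw, cs.simple_mul_simple_cancel_left]
  have hlen : cs.length (cs.simple i * w) + 1 = cs.length w := cs.isLeftDescent_iff.1 hi
  refine ⟨r, ?_, hprod⟩
  rw [CoxeterSystem.IsReduced, hprod, List.cons_append, List.length_cons, ← hr.eq, hw, hlen]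

variable [AddCommGroup V] [DistribMulAction W V]

theorem simple_mul_inv_smul (cs : CoxeterSystem M W) (w : W) (i : B) (v : V) :
    (cs.simple i * w)⁻¹ • v = w⁻¹ • cs.simple i • v := by
  rw [mul_inv_rev, cs.inv_simple, mul_smul]

/-- The inversions `α_{i₁}, s_{i₁} α_{i₂}, s_{i₁} s_{i₂} α_{i₃}, …` of a word. -/
def inversionRoots (cs : CoxeterSystem M W) (α : B → V) : List B → List V
  | [] => []
  | i :: c => α i :: (inversionRoots cs α c).map (cs.simple i • ·)

variable [PartialOrder V] {α : B → V}

/-- The Coxeter system is simply laced and acts on the simple roots `α` as in its geometric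
representation. Only a partial order making the simple roots positive is required of the ambient
group `V`; it takes the place of the sign of a root. -/
structure IsSimplyLacedRoots (cs : CoxeterSystem M W) (α : B → V) : Prop where
  two_or_three : ∀ i j, i ≠ j → M i j = 2 ∨ M i j = 3
  pos : ∀ i, 0 < α i
  smul_self : ∀ i, cs.simple i • α i = -α i
  smul_of_two : ∀ i j, M i j = 2 → cs.simple i • α j = α j
  smul_of_three : ∀ i j, M i j = 3 → cs.simple i • α j = α i + α j

namespace IsSimplyLacedRoots

theorem inversionRoots_of_two (hα : IsSimplyLacedRoots cs α) {i j : B} (hij : M i j = 2) :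
    inversionRoots cs α [i, j] = [α i, α j] := by
  simp only [inversionRoots, List.map_cons, List.map_nil, hα.smul_of_two i j hij]

theorem inversionRoots_of_three (hα : IsSimplyLacedRoots cs α) {i j : B} (hij : M i j = 3) :
    inversionRoots cs α [i, j, i] = [α i, α i + α j, α j] := by
  simp only [inversionRoots, List.map_cons, List.map_nil, smul_add, hα.smul_self,
    hα.smul_of_three i j hij, hα.smul_of_three j i (M.symmetric j i ▸ hij), add_neg_cancel_comm]

theorem inversionRoots_of_three_three (hα : IsSimplyLacedRoots cs α) {i j m : B}
    (hij : M i j = 3) (hjm : M j m = 3) (him : M i m = 2) :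
    inversionRoots cs α [i, j, i, m, j, i] =
      [α i, α i + α j, α j, α i + α j + α m, α j + α m, α m] := by
  simp only [inversionRoots, List.map_cons, List.map_nil, smul_add, smul_neg, hα.smul_self,
    hα.smul_of_three i j hij, hα.smul_of_three j i (M.symmetric j i ▸ hij),
    hα.smul_of_three j m hjm, hα.smul_of_three m j (M.symmetric m j ▸ hjm),
    hα.smul_of_two i m him, hα.smul_of_two m i (M.symmetric m i ▸ him)]
  abel_nf

theorem smul_triangle (hα : IsSimplyLacedRoots cs α) {i j m : B}
    (hij : M i j = 3) (him : M i m = 3) :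
    cs.simple i • (α i + α j + α m) = α i + α j + α m := by
  rw [smul_add, smul_add, hα.smul_self, hα.smul_of_three i j hij, hα.smul_of_three i m him]
  abel

variable [IsOrderedAddMonoid V]

theorem smul_root_nonneg (hα : IsSimplyLacedRoots cs α) (w : W) (i : B)
    (h : ¬ cs.IsRightDescent w i) : 0 ≤ w • α i := by
  induction hw : cs.length w using Nat.strong_induction_on generalizing w i with
  | _ n ih =>
  subst hw
  obtain rfl | hne := eq_or_ne w 1
  · simpa only [one_smul] using (hα.pos i).le
  obtain ⟨j, hj⟩ := cs.exists_rightDescent_of_ne_one hne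
  obtain ⟨u, rfl⟩ : ∃ u, w = u * cs.simple j := ⟨w * cs.simple j, by simp⟩
  have hlj := cs.isRightDescent_iff.1 hj
  have hli := cs.not_isRightDescent_iff.1 h
  rw [cs.simple_mul_simple_cancel_right] at hlj
  have hij : j ≠ i := fun hji => h (hji ▸ hj)
  rw [mul_smul]
  obtain hM2 | hM3 := hα.two_or_three j i hij
  · rw [hα.smul_of_two j i hM2]
    refine ih _ (by omega) u i (fun hu => ?_) rfl
    rw [mul_assoc, simple_mul_comm_of_two cs hM2, ← mul_assoc] at hli
    have := cs.isRightDescent_iff.1 hu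
    have := cs.length_mul_simple (u * cs.simple i) j
    omega
  have huj : ¬ cs.IsRightDescent u j := cs.not_isRightDescent_iff.2 hlj.symm
  rw [hα.smul_of_three j i hM3]
  by_cases hu : cs.IsRightDescent u i
  · obtain ⟨m, rfl⟩ : ∃ m, u = m * cs.simple i := ⟨u * cs.simple i, by simp⟩
    have hlm := cs.isRightDescent_iff.1 hu
    rw [cs.simple_mul_simple_cancel_right] at hlm
    rw [mul_smul, smul_add, hα.smul_self, hα.smul_of_three i j (M.symmetric i j ▸ hM3),
      add_neg_cancel_comm]
    refine ih _ (by omega) m j (fun hm => ?_) rfl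
    rw [mul_assoc, mul_assoc, ← mul_assoc (cs.simple i),
      ← simple_braid_of_three cs hM3, ← mul_assoc, ← mul_assoc] at hli
    have := cs.isRightDescent_iff.1 hm
    have := cs.length_mul_simple (m * cs.simple j) i
    have := cs.length_mul_simple (m * cs.simple j * cs.simple i) j
    omega
  · rw [smul_add]
    exact add_nonneg (ih _ (by omega) u j huj rfl) (ih _ (by omega) u i hu rfl)

theorem isLeftDescent_iff (hα : IsSimplyLacedRoots cs α) {w : W} {i : B} :
    cs.IsLeftDescent w i ↔ w⁻¹ • α i ≤ 0 := by
  constructor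
  · intro h
    have hnot := cs.isLeftDescent_iff_not_isLeftDescent_mul.1 h
    rw [← cs.isRightDescent_inv_iff] at hnot
    have hnonneg := hα.smul_root_nonneg _ _ hnot
    rwa [simple_mul_inv_smul, hα.smul_self, smul_neg, Left.nonneg_neg_iff] at hnonneg
  · intro h
    by_contra hnot
    rw [← cs.isRightDescent_inv_iff] at hnot
    have hzero : w⁻¹ • α i = 0 := le_antisymm h (hα.smul_root_nonneg _ _ hnot)
    exact (hα.pos i).ne' ((smul_eq_zero_iff_eq w⁻¹).1 hzero)

theorem hasReducedPrefix (hα : IsSimplyLacedRoots cs α) {c : List B} {w : W}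
    (h : ∀ v ∈ inversionRoots cs α c, w⁻¹ • v ≤ 0) : HasReducedPrefix cs c w := by
  induction c generalizing w with
  | nil =>
    obtain ⟨r, hr, rfl⟩ := cs.exists_isReduced w
    exact ⟨r, hr, rfl⟩
  | cons i c ih =>
    simp only [inversionRoots, List.forall_mem_cons, List.forall_mem_map] at h
    refine HasReducedPrefix.cons (hα.isLeftDescent_iff.2 h.1) (ih ?_)
    simpa only [simple_mul_inv_smul] using h.2

section Descents

variable {i j m : B} {w : W}

theorem hasReducedPrefix_of_two (hα : IsSimplyLacedRoots cs α) (hij : M i j = 2)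
    (hi : cs.IsLeftDescent w i) (hj : cs.IsLeftDescent w j) : HasReducedPrefix cs [i, j] w := by
  rw [hα.isLeftDescent_iff] at hi hj
  refine hα.hasReducedPrefix ?_
  simp [hα.inversionRoots_of_two hij, hi, hj]

theorem hasReducedPrefix_of_three (hα : IsSimplyLacedRoots cs α) (hij : M i j = 3)
    (hi : cs.IsLeftDescent w i) (hj : cs.IsLeftDescent w j) :
    HasReducedPrefix cs [i, j, i] w := by
  rw [hα.isLeftDescent_iff] at hi hj
  refine hα.hasReducedPrefix ?_
  simp [hα.inversionRoots_of_three hij, hi, hj, add_nonpos hi hj]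

theorem hasReducedPrefix_of_two_two_two (hα : IsSimplyLacedRoots cs α) (hij : M i j = 2)
    (him : M i m = 2) (hjm : M j m = 2) (hi : cs.IsLeftDescent w i)
    (hj : cs.IsLeftDescent w j) (hm : cs.IsLeftDescent w m) :
    HasReducedPrefix cs [i, j, m] w := by
  rw [hα.isLeftDescent_iff] at hi hj hm
  refine hα.hasReducedPrefix ?_
  rw [inversionRoots, hα.inversionRoots_of_two hjm]
  simp [hα.smul_of_two, hij, him, hi, hj, hm]

theorem hasReducedPrefix_of_three_two_two (hα : IsSimplyLacedRoots cs α) (hij : M i j = 3)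
    (him : M i m = 2) (hjm : M j m = 2) (hi : cs.IsLeftDescent w i)
    (hj : cs.IsLeftDescent w j) (hm : cs.IsLeftDescent w m) :
    HasReducedPrefix cs [m, i, j, i] w := by
  rw [hα.isLeftDescent_iff] at hi hj hm
  rw [M.symmetric] at him hjm
  refine hα.hasReducedPrefix ?_
  rw [inversionRoots, hα.inversionRoots_of_three hij]
  simp [hα.smul_of_two, him, hjm, hi, hj, hm, add_nonpos]

theorem hasReducedPrefix_of_three_three_two (hα : IsSimplyLacedRoots cs α) (hij : M i j = 3)
    (hjm : M j m = 3) (him : M i m = 2) (hi : cs.IsLeftDescent w i)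
    (hj : cs.IsLeftDescent w j) (hm : cs.IsLeftDescent w m) :
    HasReducedPrefix cs [i, j, i, m, j, i] w := by
  rw [hα.isLeftDescent_iff] at hi hj hm
  refine hα.hasReducedPrefix ?_
  simp [hα.inversionRoots_of_three_three hij hjm him, hi, hj, hm, add_nonpos]

/-- The three reflections of a triangle fix the sum of its roots, so stripping descents of the
triangle off `w` would keep that sum nonpositive. -/
theorem not_inv_smul_triangle_nonpos (hα : IsSimplyLacedRoots cs α) (hij : M i j = 3)
    (hjm : M j m = 3) (him : M i m = 3) (w : W) : ¬ w⁻¹ • (α i + α j + α m) ≤ 0 := by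
  intro h
  induction hw : cs.length w using Nat.strong_induction_on generalizing w with
  | _ n ih =>
  subst hw
  have hstrip : ∀ x, cs.simple x • (α i + α j + α m) = α i + α j + α m →
      0 ≤ w⁻¹ • α x := by
    intro x hx
    refine hα.smul_root_nonneg _ _ fun hdesc => ?_
    refine ih _ (cs.isRightDescent_inv_iff.1 hdesc) (cs.simple x * w) ?_ rfl
    rwa [simple_mul_inv_smul, hx]
  have hi := hstrip i (hα.smul_triangle hij him)
  have hj := hstrip j (by
    rw [add_comm (α i)]; exact hα.smul_triangle (M.symmetric j i ▸ hij) hjm)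
  have hm := hstrip m (by
    rw [add_comm, ← add_assoc]
    exact hα.smul_triangle (M.symmetric m i ▸ him) (M.symmetric m j ▸ hjm))
  have hzero : w⁻¹ • (α i + α j + α m) = 0 := by
    refine le_antisymm h ?_
    simpa only [smul_add] using add_nonneg (add_nonneg hi hj) hm
  exact (add_pos (add_pos (hα.pos i) (hα.pos j)) (hα.pos m)).ne' ((smul_eq_zero_iff_eq _).1 hzero)

theorem not_isLeftDescent_of_triangle (hα : IsSimplyLacedRoots cs α) (hij : M i j = 3)
    (hjm : M j m = 3) (him : M i m = 3) (hi : cs.IsLeftDescent w i) (hj : cs.IsLeftDescent w j) :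
    ¬ cs.IsLeftDescent w m := by
  intro hm
  refine hα.not_inv_smul_triangle_nonpos hij hjm him w ?_
  rw [hα.isLeftDescent_iff] at hi hj hm
  simpa only [smul_add] using add_nonpos (add_nonpos hi hj) hm

end Descents

end IsSimplyLacedRoots

end Roots

/-! ### Labelled words and braid moves -/

/-- A word in the letters `B`, each of them carrying a label in `X`. -/
abbrev LabelledWord (B X : Type*) := List (B × X)

namespace LabelledWord

variable {B X W : Type*} [Group W] {M : CoxeterMatrix B} {cs : CoxeterSystem M W}
  {T : X × X × X → X × X × X} {i j m : B} {P Q R : LabelledWord B X}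

/-- The underlying word. -/
def word (P : LabelledWord B X) : List B := P.map Prod.fst

theorem word_cons (p : B × X) (P : LabelledWord B X) : word (p :: P) = p.1 :: P.word := rfl

theorem length_word (P : LabelledWord B X) : P.word.length = P.length := P.length_map _

theorem exists_eq_cons_of_word_eq_cons {l : List B} (h : P.word = i :: l) :
    ∃ (x : X) (v : LabelledWord B X), P = (i, x) :: v ∧ v.word = l := by
  obtain ⟨⟨_, x⟩, v, rfl, rfl, hv⟩ := List.map_eq_cons_iff.1 h
  exact ⟨x, v, rfl, hv⟩

/-- A braid move at the beginning of a labelled word, turning its first letter `i` into `j`. The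
labels of a 3-move are transformed by `T`, those of a 2-move travel with their letters. -/
inductive HeadMove (M : CoxeterMatrix B) (T : X × X × X → X × X × X) (i j : B) :
    LabelledWord B X → LabelledWord B X → Prop
  | two {x y : X} (v : LabelledWord B X) (hij : M i j = 2) :
      HeadMove M T i j ((i, x) :: (j, y) :: v) ((j, y) :: (i, x) :: v)
  | three {x y z x' y' z' : X} (v : LabelledWord B X) (hij : M i j = 3)
      (hT : T (x, y, z) = (x', y', z')) :
      HeadMove M T i j ((i, x) :: (j, y) :: (i, z) :: v) ((j, x') :: (i, y') :: (j, z') :: v)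

/-- A braid move at an arbitrary position of a labelled word. -/
inductive Move (M : CoxeterMatrix B) (T : X × X × X → X × X × X) :
    LabelledWord B X → LabelledWord B X → Prop
  | head {i j : B} {P Q : LabelledWord B X} (h : HeadMove M T i j P Q) : Move M T P Q
  | cons (p : B × X) {P Q : LabelledWord B X} (h : Move M T P Q) : Move M T (p :: P) (p :: Q)

/-- Two labelled words are connected when a sequence of braid moves leads from one to the other. -/
abbrev Conn (M : CoxeterMatrix B) (T : X × X × X → X × X × X) :
    LabelledWord B X → LabelledWord B X → Prop :=
  Relation.ReflTransGen (Move M T)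

/-- Connectedness through moves that do not touch the first letter. -/
inductive TailConn (M : CoxeterMatrix B) (T : X × X × X → X × X × X) :
    LabelledWord B X → LabelledWord B X → Prop
  | cons (p : B × X) {P Q : LabelledWord B X} (h : Conn M T P Q) : TailConn M T (p :: P) (p :: Q)

/-- `P` leads to `Q` by moves of which exactly one touches the first letter, turning `i` into
`j`. -/
def Swap (M : CoxeterMatrix B) (T : X × X × X → X × X × X) (i j : B)
    (P Q : LabelledWord B X) : Prop :=
  ∃ N N', TailConn M T P N ∧ HeadMove M T i j N N' ∧ TailConn M T N' Q

namespace HeadMove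

theorem symm (hT : Function.Involutive T) (h : HeadMove M T i j P Q) : HeadMove M T j i Q P := by
  cases h with
  | two v hij => exact two v (M.symmetric j i ▸ hij)
  | three v hij hxyz => exact three v (M.symmetric j i ▸ hij) (hxyz ▸ hT _)

theorem ne (h : HeadMove M T i j P Q) : i ≠ j := by
  cases h with
  | two v hij => exact coxeterMatrix_ne_of_eq hij (by norm_num)
  | three v hij hxyz => exact coxeterMatrix_ne_of_eq hij (by norm_num)

theorem head?_left (h : HeadMove M T i j P Q) : P.word.head? = some i := by
  cases h <;> rfl

theorem head?_right (h : HeadMove M T i j P Q) : Q.word.head? = some j := by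
  cases h <;> rfl

theorem length_eq (h : HeadMove M T i j P Q) : P.length = Q.length := by
  cases h <;> rfl

theorem wordProd_eq (cs : CoxeterSystem M W) (h : HeadMove M T i j P Q) :
    cs.wordProd P.word = cs.wordProd Q.word := by
  cases h with
  | two v hij =>
    simp only [word_cons, cs.wordProd_cons, ← mul_assoc, simple_mul_comm_of_two cs hij]
  | three v hij hxyz =>
    simp only [word_cons, cs.wordProd_cons, ← mul_assoc, simple_braid_of_three cs hij]

end HeadMove

namespace Move

theorem symm (hT : Function.Involutive T) (h : Move M T P Q) : Move M T Q P := by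
  induction h with
  | head h => exact head (h.symm hT)
  | cons p _ ih => exact cons p ih

theorem length_eq (h : Move M T P Q) : P.length = Q.length := by
  induction h with
  | head h => exact h.length_eq
  | cons _ _ ih => exact congrArg (· + 1) ih

theorem wordProd_eq (cs : CoxeterSystem M W) (h : Move M T P Q) :
    cs.wordProd P.word = cs.wordProd Q.word := by
  induction h with
  | head h => exact h.wordProd_eq cs
  | cons p _ ih => rw [word_cons, word_cons, cs.wordProd_cons, cs.wordProd_cons, ih]

theorem tailConn_or_headMove (h : Move M T P Q) :
    TailConn M T P Q ∨ ∃ i j, HeadMove M T i j P Q := by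
  cases h with
  | head h => exact Or.inr ⟨_, _, h⟩
  | cons p h => exact Or.inl (.cons p (.single h))

end Move

namespace Conn

theorem two {x y : X} (v : LabelledWord B X) (hij : M i j = 2) :
    Conn M T ((i, x) :: (j, y) :: v) ((j, y) :: (i, x) :: v) :=
  .single (.head (.two v hij))

theorem three {x y z x' y' z' : X} (v : LabelledWord B X) (hij : M i j = 3)
    (hT : T (x, y, z) = (x', y', z')) :
    Conn M T ((i, x) :: (j, y) :: (i, z) :: v) ((j, x') :: (i, y') :: (j, z') :: v) :=
  .single (.head (.three v hij hT))

theorem symm (hT : Function.Involutive T) (h : Conn M T P Q) : Conn M T Q P :=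
  haveI : Std.Symm (Move M T) := ⟨fun _ _ => Move.symm hT⟩
  Std.Symm.symm (r := Relation.ReflTransGen (Move M T)) _ _ h

theorem cons (p : B × X) (h : Conn M T P Q) : Conn M T (p :: P) (p :: Q) :=
  h.lift (p :: ·) fun _ _ => Move.cons p

theorem length_eq (h : Conn M T P Q) : P.length = Q.length := by
  induction h with
  | refl => rfl
  | tail _ h ih => exact ih.trans h.length_eq

theorem wordProd_eq (cs : CoxeterSystem M W) (h : Conn M T P Q) :
    cs.wordProd P.word = cs.wordProd Q.word := by
  induction h with
  | refl => rfl
  | tail _ h ih => exact ih.trans (h.wordProd_eq cs)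

theorem isReduced_word (h : Conn M T P Q) (hP : cs.IsReduced P.word) :
    cs.IsReduced Q.word := by
  rw [CoxeterSystem.IsReduced, ← h.wordProd_eq cs, hP.eq, length_word, length_word,
    h.length_eq]

end Conn

namespace TailConn

theorem refl_of_head? (h : P.word.head? = some i) : TailConn M T P P := by
  cases P with
  | nil => simp [word] at h
  | cons p v => exact cons p .refl

theorem conn (h : TailConn M T P Q) : Conn M T P Q := by
  obtain ⟨p, h⟩ := h
  exact h.cons p

theorem symm (hT : Function.Involutive T) (h : TailConn M T P Q) : TailConn M T Q P := by
  obtain ⟨p, h⟩ := h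
  exact cons p (h.symm hT)

theorem trans (h : TailConn M T P Q) (h' : TailConn M T Q R) : TailConn M T P R := by
  obtain ⟨p, h⟩ := h
  obtain ⟨_, h'⟩ := h'
  exact cons p (Relation.ReflTransGen.trans h h')

theorem head?_eq (h : TailConn M T P Q) : P.word.head? = Q.word.head? := by
  obtain ⟨p, h⟩ := h
  rfl

theorem trans_swap (h : TailConn M T P Q) (h' : Swap M T i j Q R) :
    Swap M T i j P R := by
  obtain ⟨N, N', hPN, hN, hNQ⟩ := h'
  exact ⟨N, N', h.trans hPN, hN, hNQ⟩

end TailConn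

theorem HeadMove.swap (h : HeadMove M T i j P Q) : Swap M T i j P Q :=
  ⟨P, Q, .refl_of_head? h.head?_left, h, .refl_of_head? h.head?_right⟩

namespace Swap

theorem symm (hT : Function.Involutive T) (h : Swap M T i j P Q) : Swap M T j i Q P := by
  obtain ⟨N, N', hPN, hN, hNQ⟩ := h
  exact ⟨N', N, hNQ.symm hT, hN.symm hT, hPN.symm hT⟩

theorem trans_tailConn (h : Swap M T i j P Q) (h' : TailConn M T Q R) : Swap M T i j P R := by
  obtain ⟨N, N', hPN, hN, hNQ⟩ := h
  exact ⟨N, N', hPN, hN, hNQ.trans h'⟩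

theorem conn (h : Swap M T i j P Q) : Conn M T P Q := by
  obtain ⟨N, N', hPN, hN, hNQ⟩ := h
  exact (hPN.conn.tail (.head hN)).trans hNQ.conn

theorem ne (h : Swap M T i j P Q) : i ≠ j := by
  obtain ⟨N, N', -, hN, -⟩ := h
  exact hN.ne

theorem head?_left (h : Swap M T i j P Q) : P.word.head? = some i := by
  obtain ⟨N, N', hPN, hN, -⟩ := h
  exact hPN.head?_eq.trans hN.head?_left

theorem head?_right (h : Swap M T i j P Q) : Q.word.head? = some j := by
  obtain ⟨N, N', -, hN, hNQ⟩ := h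
  exact hNQ.head?_eq.symm.trans hN.head?_right

end Swap

/-! ### Reaching every reduced word -/

/-- Every reduced word of the element spelled by `P` underlies some labelled word connected
to `P`. -/
def ReachesReducedWords (cs : CoxeterSystem M W) (T : X × X × X → X × X × X)
    (P : LabelledWord B X) : Prop :=
  ∀ l, cs.IsReduced l → cs.wordProd l = cs.wordProd P.word → ∃ Q, Conn M T P Q ∧ Q.word = l

theorem ReachesReducedWords.exists_tailConn {x : X} {v : LabelledWord B X} {c : List B}
    (hv : ReachesReducedWords cs T v)
    (h : HasReducedPrefix cs (i :: c) (cs.wordProd (i :: v.word))) :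
    ∃ N r, TailConn M T ((i, x) :: v) N ∧ N.word = i :: (c ++ r) := by
  obtain ⟨r, hr, hprod⟩ := h
  rw [List.cons_append, cs.wordProd_cons, cs.wordProd_cons, mul_right_inj] at hprod
  obtain ⟨u, hvu, hu⟩ := hv (c ++ r) (hr.drop 1) hprod
  exact ⟨_, r, .cons _ hvu, congrArg (i :: ·) hu⟩

variable {V : Type*} [AddCommGroup V] [DistribMulAction W V] [PartialOrder V]
  [IsOrderedAddMonoid V] {α : B → V}

theorem ReachesReducedWords.exists_headMove (hα : IsSimplyLacedRoots cs α) {x : X}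
    {v : LabelledWord B X} (hv : ReachesReducedWords cs T v) (hP : cs.IsReduced (i :: v.word))
    (hij : i ≠ j) (hj : cs.IsLeftDescent (cs.wordProd (i :: v.word)) j) :
    ∃ N N', TailConn M T ((i, x) :: v) N ∧ HeadMove M T i j N N' := by
  have hi := isLeftDescent_of_isReduced_cons hP
  obtain h2 | h3 := hα.two_or_three i j hij
  · obtain ⟨_, _, hPN, hN⟩ := hv.exists_tailConn (hα.hasReducedPrefix_of_two h2 hi hj)
    obtain ⟨_, _, rfl, hN₁⟩ := exists_eq_cons_of_word_eq_cons hN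
    obtain ⟨_, u, rfl, -⟩ := exists_eq_cons_of_word_eq_cons hN₁
    exact ⟨_, _, hPN, .two u h2⟩
  · obtain ⟨_, _, hPN, hN⟩ := hv.exists_tailConn (hα.hasReducedPrefix_of_three h3 hi hj)
    obtain ⟨_, _, rfl, hN₁⟩ := exists_eq_cons_of_word_eq_cons hN
    obtain ⟨_, _, rfl, hN₂⟩ := exists_eq_cons_of_word_eq_cons hN₁
    obtain ⟨_, u, rfl, -⟩ := exists_eq_cons_of_word_eq_cons hN₂
    exact ⟨_, _, hPN, .three u h3 rfl⟩

/-- Matsumoto's theorem, with the labels carried along. -/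
theorem reachesReducedWords (hα : IsSimplyLacedRoots cs α) (T : X × X × X → X × X × X)
    {P : LabelledWord B X} (hP : cs.IsReduced P.word) : ReachesReducedWords cs T P := by
  induction hn : P.length generalizing P with
  | zero =>
    obtain rfl := List.length_eq_zero_iff.1 hn
    intro l hl hprod
    refine ⟨[], .refl, (List.length_eq_zero_iff.1 ?_).symm⟩
    rw [← hl.eq, hprod, hP.eq, length_word, hn]
  | succ n ih =>
    obtain ⟨⟨i, x⟩, v, rfl⟩ := List.exists_cons_of_length_eq_add_one hn
    rw [List.length_cons, Nat.add_right_cancel_iff] at hn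
    have hv : cs.IsReduced (word v) := hP.drop 1
    intro l hl hprod
    have hlen : l.length = n + 1 := by
      rw [← hl.eq, hprod, hP.eq, length_word, List.length_cons, hn]
    obtain ⟨j, l, rfl⟩ := List.exists_cons_of_length_eq_add_one hlen
    obtain rfl | hij := eq_or_ne i j
    · rw [word_cons, cs.wordProd_cons, cs.wordProd_cons, mul_right_inj] at hprod
      obtain ⟨u, hvu, rfl⟩ := ih hv hn l (hl.drop 1) hprod
      exact ⟨_, hvu.cons _, rfl⟩
    · have hj := isLeftDescent_of_isReduced_cons hl
      rw [hprod] at hj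
      obtain ⟨N, N', hPN, hNN'⟩ := (ih hv hn).exists_headMove hα (x := x) hP hij hj
      have hPN' : Conn M T ((i, x) :: v) N' := hPN.conn.tail (.head hNN')
      obtain ⟨l', hl'⟩ := List.head?_eq_some_iff.1 hNN'.head?_right
      obtain ⟨y, u, rfl, rfl⟩ := exists_eq_cons_of_word_eq_cons hl'
      have hu : cs.IsReduced u.word := (hPN'.isReduced_word hP).drop 1
      have hun : u.length = n := by simpa [hn] using hPN'.length_eq.symm
      rw [hPN'.wordProd_eq cs, word_cons, cs.wordProd_cons, cs.wordProd_cons,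
        mul_right_inj] at hprod
      obtain ⟨u', huu', rfl⟩ := ih hu hun l (hl.drop 1) hprod
      exact ⟨_, hPN'.trans (huu'.cons _), rfl⟩

theorem exists_tailConn_of_hasReducedPrefix (hα : IsSimplyLacedRoots cs α)
    (T : X × X × X → X × X × X) {c : List B} (hP : cs.IsReduced P.word)
    (hi : P.word.head? = some i) (h : HasReducedPrefix cs (i :: c) (cs.wordProd P.word)) :
    ∃ N r, TailConn M T P N ∧ N.word = i :: (c ++ r) := by
  obtain ⟨l, hl⟩ := List.head?_eq_some_iff.1 hi
  obtain ⟨x, v, rfl, -⟩ := exists_eq_cons_of_word_eq_cons hl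
  exact (reachesReducedWords hα T (hP.drop 1)).exists_tailConn h

theorem exists_swap (hα : IsSimplyLacedRoots cs α) (T : X × X × X → X × X × X)
    (hP : cs.IsReduced P.word) (hi : P.word.head? = some i) (hij : i ≠ j)
    (hj : cs.IsLeftDescent (cs.wordProd P.word) j) : ∃ Q, Swap M T i j P Q := by
  obtain ⟨l, hl⟩ := List.head?_eq_some_iff.1 hi
  obtain ⟨x, v, rfl, -⟩ := exists_eq_cons_of_word_eq_cons hl
  obtain ⟨N, N', hPN, hNN'⟩ :=
    (reachesReducedWords hα T (hP.drop 1)).exists_headMove hα (x := x) hP hij hj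
  exact ⟨N', hPN.trans_swap hNN'.swap⟩

/-! ### Uniqueness of the labels -/

/-- Connected reduced labelled words of length less than `n` with the same letters have the same
labels. -/
def UniqueLabels (cs : CoxeterSystem M W) (T : X × X × X → X × X × X) (n : ℕ) : Prop :=
  ∀ P Q : LabelledWord B X, P.length < n → cs.IsReduced P.word → Conn M T P Q →
    P.word = Q.word → P = Q

theorem UniqueLabels.cons_inj (hα : IsSimplyLacedRoots cs α) (hT : Function.Involutive T) {n : ℕ}
    (hn : UniqueLabels cs T n) {x y : X} {u v : LabelledWord B X}
    (h : Conn M T ((i, x) :: u) ((i, y) :: v)) (hlen : ((i, x) :: u).length < n)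
    (hred : cs.IsReduced (word ((i, x) :: u))) : x = y ∧ Conn M T u v := by
  have hprod := h.wordProd_eq cs
  rw [word_cons, word_cons, cs.wordProd_cons, cs.wordProd_cons, mul_right_inj] at hprod
  obtain ⟨v', huv', hv'⟩ := reachesReducedWords hα T (hred.drop 1) v.word
    ((h.isReduced_word hred).drop 1) hprod.symm
  have heq : (i, x) :: v' = (i, y) :: v := by
    refine (hn _ _ ?_ (h.isReduced_word hred) ?_ ?_).symm
    · rwa [← h.length_eq]
    · exact (h.symm hT).trans (huv'.cons _)
    · rw [word_cons, word_cons, hv']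
  obtain ⟨hxy, rfl⟩ := List.cons.inj heq
  exact ⟨congrArg Prod.snd hxy, huv'⟩

theorem UniqueLabels.tailConn_of_headMove (hα : IsSimplyLacedRoots cs α)
    (hT : Function.Involutive T) {N N' : LabelledWord B X} (hn : UniqueLabels cs T P.length)
    (hP : cs.IsReduced P.word) (h : TailConn M T P N) (hQ : HeadMove M T i j P Q)
    (hN' : HeadMove M T i j N N') : TailConn M T Q N' := by
  cases hQ with
  | two v hij =>
    cases hN' with
    | three _ hij' => omega
    | two v' =>
      obtain ⟨_, h₁⟩ := h
      obtain ⟨rfl, h₂⟩ := hn.cons_inj hα hT h₁ (by simp) (hP.drop 1)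
      exact .cons _ (h₂.cons _)
  | three v hij hxyz =>
    cases hN' with
    | two _ hij' => omega
    | three v' _ hxyz' =>
      obtain ⟨_, h₁⟩ := h
      obtain ⟨rfl, h₂⟩ := hn.cons_inj hα hT h₁ (by simp) (hP.drop 1)
      obtain ⟨rfl, h₃⟩ := hn.cons_inj hα hT h₂ (by simp) (hP.drop 2)
      obtain ⟨rfl, rfl, rfl⟩ : _ ∧ _ ∧ _ := by simpa [Prod.ext_iff] using hxyz.symm.trans hxyz'
      exact .cons _ ((h₃.cons _).cons _)

theorem UniqueLabels.tailConn_of_swap (hα : IsSimplyLacedRoots cs α)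
    (hT : Function.Involutive T) (hn : UniqueLabels cs T P.length)
    (hP : cs.IsReduced P.word) (hQ : Swap M T i j P Q)
    (hR : Swap M T i j P R) : TailConn M T Q R := by
  obtain ⟨N₁, N₁', hPN₁, h₁, hQ⟩ := hQ
  obtain ⟨N₂, N₂', hPN₂, h₂, hR⟩ := hR
  rw [hPN₁.conn.length_eq] at hn
  have hN := hn.tailConn_of_headMove hα hT (hPN₁.conn.isReduced_word hP)
    ((hPN₁.symm hT).trans hPN₂) h₁ h₂
  exact ((hQ.symm hT).trans hN).trans hR

theorem isLeftDescent_of_head? (hP : cs.IsReduced P.word) (hi : P.word.head? = some i) :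
    cs.IsLeftDescent (cs.wordProd P.word) i := by
  obtain ⟨l, hl⟩ := List.head?_eq_some_iff.1 hi
  rw [hl] at hP ⊢
  exact isLeftDescent_of_isReduced_cons hP

/-- The swaps `i → j`, `j → m` and `i → m` fit together into a triangle with corner `P`. -/
def SwapTriangle (M : CoxeterMatrix B) (T : X × X × X → X × X × X) (i j m : B)
    (P : LabelledWord B X) : Prop :=
  ∃ Q R, Swap M T i j P Q ∧ Swap M T j m Q R ∧ Swap M T i m P R

namespace SwapTriangle

theorem swap_right (hT : Function.Involutive T) (h : SwapTriangle M T i j m P) :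
    SwapTriangle M T i m j P := by
  obtain ⟨Q, R, hPQ, hQR, hPR⟩ := h
  exact ⟨R, Q, hPR, hQR.symm hT, hPQ⟩

theorem of_tailConn (h : TailConn M T P Q) (hQ : SwapTriangle M T i j m Q) :
    SwapTriangle M T i j m P := by
  obtain ⟨R, S, hQR, hRS, hQS⟩ := hQ
  exact ⟨R, S, h.trans_swap hQR, hRS, h.trans_swap hQS⟩

theorem of_swap (hα : IsSimplyLacedRoots cs α) (hT : Function.Involutive T)
    (hn : UniqueLabels cs T P.length) (hP : cs.IsReduced P.word) (h : Swap M T i j P Q)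
    (hQ : SwapTriangle M T j i m Q) : SwapTriangle M T i j m P := by
  obtain ⟨P', R, hQP', hP'R, hQR⟩ := hQ
  rw [h.conn.length_eq] at hn
  have hPP' := hn.tailConn_of_swap hα hT (h.conn.isReduced_word hP) (h.symm hT) hQP'
  exact ⟨Q, R, h, hQR, hPP'.trans_swap hP'R⟩

theorem of_two_two_two (hα : IsSimplyLacedRoots cs α) (T : X × X × X → X × X × X)
    (hij : M i j = 2) (him : M i m = 2) (hjm : M j m = 2) (hP : cs.IsReduced P.word)
    (hi : P.word.head? = some i) (hj : cs.IsLeftDescent (cs.wordProd P.word) j)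
    (hm : cs.IsLeftDescent (cs.wordProd P.word) m) : SwapTriangle M T i j m P := by
  obtain ⟨_, _, hPN, hN⟩ := exists_tailConn_of_hasReducedPrefix hα T hP hi
    (hα.hasReducedPrefix_of_two_two_two hij him hjm (isLeftDescent_of_head? hP hi) hj hm)
  obtain ⟨a, _, rfl, hN₁⟩ := exists_eq_cons_of_word_eq_cons hN
  obtain ⟨b, _, rfl, hN₂⟩ := exists_eq_cons_of_word_eq_cons hN₁
  obtain ⟨c, v, rfl, -⟩ := exists_eq_cons_of_word_eq_cons hN₂
  refine of_tailConn hPN ⟨(j, b) :: (m, c) :: (i, a) :: v, (m, c) :: (j, b) :: (i, a) :: v,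
    ?_, (HeadMove.two _ hjm).swap, ?_⟩
  · exact (HeadMove.two _ hij).swap.trans_tailConn (.cons _ (.two _ him))
  · exact TailConn.trans_swap (.cons _ (.two _ hjm))
      ((HeadMove.two _ him).swap.trans_tailConn (.cons _ (.two _ hij)))

theorem of_three_two_two (hα : IsSimplyLacedRoots cs α) (T : X × X × X → X × X × X)
    (hij : M i j = 3) (him : M i m = 2) (hjm : M j m = 2) (hP : cs.IsReduced P.word)
    (hm : P.word.head? = some m) (hi : cs.IsLeftDescent (cs.wordProd P.word) i)
    (hj : cs.IsLeftDescent (cs.wordProd P.word) j) : SwapTriangle M T m i j P := by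
  obtain ⟨_, _, hPN, hN⟩ := exists_tailConn_of_hasReducedPrefix hα T hP hm
    (hα.hasReducedPrefix_of_three_two_two hij him hjm hi hj (isLeftDescent_of_head? hP hm))
  obtain ⟨a, _, rfl, hN₁⟩ := exists_eq_cons_of_word_eq_cons hN
  obtain ⟨b, _, rfl, hN₂⟩ := exists_eq_cons_of_word_eq_cons hN₁
  obtain ⟨c, _, rfl, hN₃⟩ := exists_eq_cons_of_word_eq_cons hN₂
  obtain ⟨d, v, rfl, -⟩ := exists_eq_cons_of_word_eq_cons hN₃
  obtain ⟨⟨b', c', d'⟩, hbcd⟩ : ∃ t, T (b, c, d) = t := ⟨_, rfl⟩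
  have hmi : M m i = 2 := M.symmetric m i ▸ him
  have hmj : M m j = 2 := M.symmetric m j ▸ hjm
  refine of_tailConn hPN ⟨(i, b) :: (j, c) :: (i, d) :: (m, a) :: v,
    (j, b') :: (i, c') :: (j, d') :: (m, a) :: v, ?_, (HeadMove.three _ hij hbcd).swap, ?_⟩
  · exact (HeadMove.two _ hmi).swap.trans_tailConn
      (.cons _ ((Conn.two _ hmj).trans ((Conn.two _ hmi).cons _)))
  · exact TailConn.trans_swap (.cons _ (.three _ hij hbcd))
      ((HeadMove.two _ hmj).swap.trans_tailConn
        (.cons _ ((Conn.two _ hmi).trans ((Conn.two _ hmj).cons _))))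

end SwapTriangle

/-- Zamolodchikov's tetrahedron equation: the two ways of transforming the labels of `ijimji` into
those of `mjmijm` by 2-moves and 3-moves, where `i` commutes with `m`, agree. -/
def IsTetrahedral (T : X × X × X → X × X × X) : Prop :=
  ∀ a b c d e f,
    (let (a₁, b₁, c₁) := T (a, b, c)
      let (c₂, d₁, e₁) := T (c₁, d, e)
      let (b₂, d₂, f₁) := T (b₁, d₁, f)
      let (a₂, c₃, b₃) := T (a₁, c₂, b₂)
      (a₂, c₃, b₃, d₂, f₁, e₁)) =
    (let (c₁, e₁, f₁) := T (c, e, f)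
      let (b₁, d₁, c₂) := T (b, d, c₁)
      let (a₁, d₂, e₂) := T (a, d₁, e₁)
      let (e₃, c₃, f₂) := T (e₂, c₂, f₁)
      (b₁, a₁, e₃, d₂, c₃, f₂))

theorem swap_of_jijmji (hij : M i j = 3) (hjm : M j m = 3) (him : M i m = 2)
    {a a₁ b b₁ b₂ c c₁ c₂ d d₁ d₂ e e₁ f f₁ : X} (v : LabelledWord B X)
    (hcde : T (c, d, e) = (c₁, d₁, e₁)) (hbdf : T (b, d₁, f) = (b₁, d₂, f₁))
    (habc : T (a, c₁, b₁) = (a₁, c₂, b₂)) :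
    Swap M T j m ((j, a) :: (i, b) :: (j, c) :: (m, d) :: (j, e) :: (i, f) :: v)
      ((m, a₁) :: (j, c₂) :: (m, b₂) :: (i, d₂) :: (j, f₁) :: (m, e₁) :: v) := by
  have hmi : M m i = 2 := M.symmetric m i ▸ him
  refine TailConn.trans_swap (.cons _ ?_) (HeadMove.three _ hjm habc).swap
  calc Conn M T ((i, b) :: (j, c) :: (m, d) :: (j, e) :: (i, f) :: v)
        ((i, b) :: (m, c₁) :: (j, d₁) :: (m, e₁) :: (i, f) :: v) :=
          (Conn.three _ hjm hcde).cons _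
    Conn M T _ ((m, c₁) :: (i, b) :: (j, d₁) :: (m, e₁) :: (i, f) :: v) := .two _ him
    Conn M T _ ((m, c₁) :: (i, b) :: (j, d₁) :: (i, f) :: (m, e₁) :: v) :=
          (((Conn.two _ hmi).cons _).cons _).cons _
    Conn M T _ ((m, c₁) :: (j, b₁) :: (i, d₂) :: (j, f₁) :: (m, e₁) :: v) :=
          (Conn.three _ hij hbdf).cons _

theorem swap_of_ijimji (hij : M i j = 3) (hjm : M j m = 3) (him : M i m = 2)
    {a a₁ b b₁ c c₁ c₂ c₃ d d₁ d₂ e e₁ e₂ e₃ f f₁ f₂ : X} (v : LabelledWord B X)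
    (hcef : T (c, e, f) = (c₁, e₁, f₁)) (hbdc : T (b, d, c₁) = (b₁, d₁, c₂))
    (hade : T (a, d₁, e₁) = (a₁, d₂, e₂)) (hecf : T (e₂, c₂, f₁) = (e₃, c₃, f₂)) :
    Swap M T i m ((i, a) :: (j, b) :: (i, c) :: (m, d) :: (j, e) :: (i, f) :: v)
      ((m, b₁) :: (j, a₁) :: (m, e₃) :: (i, d₂) :: (j, c₃) :: (m, f₂) :: v) := by
  have hmi : M m i = 2 := M.symmetric m i ▸ him
  have hbefore : Conn M T ((j, b) :: (i, c) :: (m, d) :: (j, e) :: (i, f) :: v)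
      ((m, b₁) :: (j, d₁) :: (m, c₂) :: (i, e₁) :: (j, f₁) :: v) :=
    calc Conn M T _ ((j, b) :: (m, d) :: (i, c) :: (j, e) :: (i, f) :: v) :=
            (Conn.two _ him).cons _
      Conn M T _ ((j, b) :: (m, d) :: (j, c₁) :: (i, e₁) :: (j, f₁) :: v) :=
            ((Conn.three _ hij hcef).cons _).cons _
      Conn M T _ ((m, b₁) :: (j, d₁) :: (m, c₂) :: (i, e₁) :: (j, f₁) :: v) :=
            .three _ hjm hbdc
  have hafter : Conn M T ((i, a) :: (j, d₁) :: (m, c₂) :: (i, e₁) :: (j, f₁) :: v)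
      ((j, a₁) :: (m, e₃) :: (i, d₂) :: (j, c₃) :: (m, f₂) :: v) :=
    calc Conn M T _ ((i, a) :: (j, d₁) :: (i, e₁) :: (m, c₂) :: (j, f₁) :: v) :=
            ((Conn.two _ hmi).cons _).cons _
      Conn M T _ ((j, a₁) :: (i, d₂) :: (j, e₂) :: (m, c₂) :: (j, f₁) :: v) :=
            .three _ hij hade
      Conn M T _ ((j, a₁) :: (i, d₂) :: (m, e₃) :: (j, c₃) :: (m, f₂) :: v) :=
            ((Conn.three _ hjm hecf).cons _).cons _
      Conn M T _ ((j, a₁) :: (m, e₃) :: (i, d₂) :: (j, c₃) :: (m, f₂) :: v) :=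
            (Conn.two _ him).cons _
  exact TailConn.trans_swap (.cons _ hbefore)
    ((HeadMove.two _ him).swap.trans_tailConn (.cons _ hafter))

namespace SwapTriangle

theorem of_isTetrahedral (hTet : IsTetrahedral T) (hij : M i j = 3) (hjm : M j m = 3)
    (him : M i m = 2) (a b c d e f : X) (v : LabelledWord B X) :
    SwapTriangle M T i j m
      ((i, a) :: (j, b) :: (i, c) :: (m, d) :: (j, e) :: (i, f) :: v) := by
  refine ⟨_, _, (HeadMove.three _ hij rfl).swap, swap_of_jijmji hij hjm him v rfl rfl rfl, ?_⟩
  convert swap_of_ijimji (T := T) hij hjm him v rfl rfl rfl rfl using 1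
  have heq := hTet a b c d e f
  simp only [Prod.mk.injEq] at heq
  simp only [heq]

theorem of_three_three_two (hα : IsSimplyLacedRoots cs α) (hTet : IsTetrahedral T)
    (hij : M i j = 3) (hjm : M j m = 3) (him : M i m = 2) (hP : cs.IsReduced P.word)
    (hi : P.word.head? = some i) (hj : cs.IsLeftDescent (cs.wordProd P.word) j)
    (hm : cs.IsLeftDescent (cs.wordProd P.word) m) : SwapTriangle M T i j m P := by
  obtain ⟨_, _, hPN, hN⟩ := exists_tailConn_of_hasReducedPrefix hα T hP hi
    (hα.hasReducedPrefix_of_three_three_two hij hjm him (isLeftDescent_of_head? hP hi) hj hm)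
  obtain ⟨a, _, rfl, hN₁⟩ := exists_eq_cons_of_word_eq_cons hN
  obtain ⟨b, _, rfl, hN₂⟩ := exists_eq_cons_of_word_eq_cons hN₁
  obtain ⟨c, _, rfl, hN₃⟩ := exists_eq_cons_of_word_eq_cons hN₂
  obtain ⟨d, _, rfl, hN₄⟩ := exists_eq_cons_of_word_eq_cons hN₃
  obtain ⟨e, _, rfl, hN₅⟩ := exists_eq_cons_of_word_eq_cons hN₄
  obtain ⟨f, v, rfl, -⟩ := exists_eq_cons_of_word_eq_cons hN₅
  exact of_tailConn hPN (of_isTetrahedral hTet hij hjm him a b c d e f v)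

/-- A rank three system of types `A₁³`, `A₁ × A₂` or `A₃` has a distinguished letter at which the
triangle is built directly; the other corners follow by symmetry. -/
theorem of_isLeftDescent (hα : IsSimplyLacedRoots cs α) (hT : Function.Involutive T)
    (hTet : IsTetrahedral T) (hn : UniqueLabels cs T P.length) (hij : i ≠ j) (him : i ≠ m)
    (hjm : j ≠ m) (hP : cs.IsReduced P.word) (hi : P.word.head? = some i)
    (hj : cs.IsLeftDescent (cs.wordProd P.word) j)
    (hm : cs.IsLeftDescent (cs.wordProd P.word) m) : SwapTriangle M T i j m P := by
  have hi' := isLeftDescent_of_head? hP hi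
  have of_corner {x y : B} (hix : i ≠ x) (hx : cs.IsLeftDescent (cs.wordProd P.word) x)
      (h : ∀ Q : LabelledWord B X, cs.IsReduced Q.word → cs.wordProd P.word = cs.wordProd Q.word →
        Q.word.head? = some x → SwapTriangle M T x i y Q) : SwapTriangle M T i x y P := by
    obtain ⟨Q, hPQ⟩ := exists_swap hα T hP hi hix hx
    exact of_swap hα hT hn hP hPQ
      (h Q (hPQ.conn.isReduced_word hP) (hPQ.conn.wordProd_eq cs) hPQ.head?_right)
  obtain hij₂ | hij₃ := hα.two_or_three i j hij <;>
    obtain him₂ | him₃ := hα.two_or_three i m him <;>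
    obtain hjm₂ | hjm₃ := hα.two_or_three j m hjm
  · exact of_two_two_two hα T hij₂ him₂ hjm₂ hP hi hj hm
  · exact of_three_two_two hα T hjm₃ (M.symmetric j i ▸ hij₂) (M.symmetric m i ▸ him₂) hP hi hj hm
  · exact of_corner hij hj fun Q hQ hPQ hjQ => of_three_two_two hα T him₃ hij₂
      (M.symmetric m j ▸ hjm₂) hQ hjQ (hPQ ▸ hi') (hPQ ▸ hm)
  · exact (of_three_three_two hα hTet him₃ (M.symmetric m j ▸ hjm₃) hij₂ hP hi hm hj).swap_right hT
  · exact (of_corner him hm fun Q hQ hPQ hmQ => of_three_two_two hα T hij₃ him₂ hjm₂ hQ hmQ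
      (hPQ ▸ hi') (hPQ ▸ hj)).swap_right hT
  · exact of_three_three_two hα hTet hij₃ hjm₃ him₂ hP hi hj hm
  · exact of_corner hij hj fun Q hQ hPQ hjQ => of_three_three_two hα hTet
      (M.symmetric j i ▸ hij₃) him₃ hjm₂ hQ hjQ (hPQ ▸ hi') (hPQ ▸ hm)
  · exact absurd hm (hα.not_isLeftDescent_of_triangle hij₃ hjm₃ him₃ hi' hj)

end SwapTriangle

theorem UniqueLabels.swap_trans (hα : IsSimplyLacedRoots cs α) (hT : Function.Involutive T)
    (hTet : IsTetrahedral T) (hn : UniqueLabels cs T P.length) (hP : cs.IsReduced P.word)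
    (hPQ : Swap M T i j P Q) (hQR : Swap M T j m Q R) (him : i ≠ m) : Swap M T i m P R := by
  have hQ := hPQ.conn.isReduced_word hP
  have hR := hQR.conn.isReduced_word hQ
  have hj := isLeftDescent_of_head? hQ hPQ.head?_right
  have hm := isLeftDescent_of_head? hR hQR.head?_right
  rw [← hQR.conn.wordProd_eq cs, ← hPQ.conn.wordProd_eq cs] at hm
  rw [← hPQ.conn.wordProd_eq cs] at hj
  obtain ⟨Q', R', hPQ', hQR', hPR'⟩ :=
    SwapTriangle.of_isLeftDescent hα hT hTet hn hPQ.ne him hQR.ne hP hPQ.head?_left hj hm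
  have hQQ' := hn.tailConn_of_swap hα hT hP hPQ hPQ'
  rw [hPQ.conn.length_eq] at hn
  exact hPR'.trans_tailConn (hn.tailConn_of_swap hα hT hQ (hQQ'.trans_swap hQR') hQR)

theorem UniqueLabels.tailConn_or_swap (hα : IsSimplyLacedRoots cs α)
    (hT : Function.Involutive T) (hTet : IsTetrahedral T) (hn : UniqueLabels cs T P.length)
    (hP : cs.IsReduced P.word) (hi : P.word.head? = some i) (h : Conn M T P Q) :
    TailConn M T P Q ∨ ∃ j, Swap M T i j P Q := by
  induction h with
  | refl => exact .inl (.refl_of_head? hi)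
  | @tail Q R hPQ hQR ih =>
  obtain hQR | ⟨j, m, hQR⟩ := hQR.tailConn_or_headMove
  · exact ih.imp (·.trans hQR) fun ⟨j, hPQ⟩ => ⟨j, hPQ.trans_tailConn hQR⟩
  obtain hPQ | ⟨j', hPQ⟩ := ih
  · obtain rfl : i = j := by
      rw [← Option.some_inj, ← hi, hPQ.head?_eq, hQR.head?_left]
    exact .inr ⟨m, hPQ.trans_swap hQR.swap⟩
  · obtain rfl : j' = j := by
      rw [← Option.some_inj, ← hPQ.head?_right, hQR.head?_left]
    obtain rfl | him := eq_or_ne i m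
    · rw [hPQ.conn.length_eq] at hn
      exact .inl (hn.tailConn_of_swap hα hT (hPQ.conn.isReduced_word hP) (hPQ.symm hT) hQR.swap)
    · exact .inr ⟨m, hn.swap_trans hα hT hTet hP hPQ hQR.swap him⟩

theorem eq_of_conn (hα : IsSimplyLacedRoots cs α) (hT : Function.Involutive T)
    (hTet : IsTetrahedral T) (hP : cs.IsReduced P.word) (h : Conn M T P Q)
    (hword : P.word = Q.word) : P = Q := by
  induction hn : P.length using Nat.strong_induction_on generalizing P Q with
  | _ n ih =>
  subst hn
  have hunique : UniqueLabels cs T P.length := fun P' Q' hlt hP' h' hword' =>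
    ih _ hlt hP' h' hword' rfl
  cases P with
  | nil => exact (List.length_eq_zero_iff.1 h.length_eq.symm).symm
  | cons p u =>
  obtain hPQ | ⟨j, hPQ⟩ := hunique.tailConn_or_swap hα hT hTet hP rfl h
  · obtain ⟨_, hu⟩ := hPQ
    exact congrArg (p :: ·) (ih u.length (by simp) (hP.drop 1) hu (List.cons.inj hword).2 rfl)
  · have hpj : some p.1 = some j := (congrArg List.head? hword).trans hPQ.head?_right
    exact absurd (Option.some_inj.1 hpj) hPQ.ne

end LabelledWord

/-! ### The Weyl group of a simply-laced Cartan matrix -/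

/-- A symmetric Cartan matrix with off-diagonal entries `0` and `-1`, not necessarily indecomposable
or of finite type. -/
structure IsSimplyLacedCartan {n : ℕ} (a : Fin n → Fin n → ℤ) : Prop where
  diag : ∀ i, a i i = 2
  symm : ∀ i j, a i j = a j i
  offdiag : ∀ i j, i ≠ j → a i j = 0 ∨ a i j = -1

section Cartan

variable {n : ℕ} {a : Fin n → Fin n → ℤ}

/-- The simple coroot `α_i^∨`, as a functional on the root space. -/
def simpleCoroot (a : Fin n → Fin n → ℤ) (i : Fin n) : Module.Dual ℚ (Fin n → ℚ) :=
  Fintype.linearCombination ℚ fun j => (a i j : ℚ)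

theorem simpleCoroot_single (a : Fin n → Fin n → ℤ) (i j : Fin n) :
    simpleCoroot a i (Pi.single j 1) = a i j := by
  rw [simpleCoroot, Fintype.linearCombination_apply_single, one_smul]

theorem sRefl_apply (a : Fin n → Fin n → ℤ) (i : Fin n) (v : Fin n → ℚ) :
    sRefl a i v = v - simpleCoroot a i v • Pi.single i 1 := by
  simp only [sRefl, simpleCoroot, Fintype.linearCombination_apply, smul_eq_mul, mul_comm]

namespace IsSimplyLacedCartan

/-- The Coxeter matrix of the Weyl group of `a`. -/
def coxeterMatrix (ha : IsSimplyLacedCartan a) : CoxeterMatrix (Fin n) where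
  M i j := if i = j then 1 else if a i j = 0 then 2 else 3
  isSymm := Matrix.IsSymm.ext fun i j => by simp only [eq_comm, ha.symm i j]
  diagonal i := if_pos rfl
  off_diagonal i j hij := by
    rw [if_neg hij]
    split_ifs <;> norm_num

theorem coxeterMatrix_eq_two_iff (ha : IsSimplyLacedCartan a) {i j : Fin n} :
    ha.coxeterMatrix i j = 2 ↔ a i j = 0 := by
  have := ha.diag i
  change (if i = j then 1 else if a i j = 0 then 2 else 3) = 2 ↔ _
  grind

theorem coxeterMatrix_eq_three_iff (ha : IsSimplyLacedCartan a) {i j : Fin n} :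
    ha.coxeterMatrix i j = 3 ↔ a i j = -1 := by
  have := ha.diag i
  have := ha.offdiag i j
  change (if i = j then 1 else if a i j = 0 then 2 else 3) = 3 ↔ _
  grind

/-- The simple reflection `sRefl a i`, as a linear automorphism. -/
def simpleReflection (ha : IsSimplyLacedCartan a) (i : Fin n) : (Fin n → ℚ) ≃ₗ[ℚ] (Fin n → ℚ) :=
  Module.reflection (x := Pi.single i 1) (f := simpleCoroot a i)
    (by rw [simpleCoroot_single, ha.diag, Int.cast_ofNat])

theorem simpleReflection_apply (ha : IsSimplyLacedCartan a) (i : Fin n) (v : Fin n → ℚ) :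
    ha.simpleReflection i v = v - simpleCoroot a i v • Pi.single i 1 :=
  Module.reflection_apply _ _

theorem isLiftable_simpleReflection (ha : IsSimplyLacedCartan a) :
    ha.coxeterMatrix.IsLiftable ha.simpleReflection := by
  intro i j
  obtain rfl | hij := eq_or_ne i j
  · rw [ha.coxeterMatrix.diagonal, pow_one]
    exact LinearEquiv.ext (Module.involutive_reflection _)
  refine LinearEquiv.ext fun v => ?_
  obtain h | h := ha.offdiag i j hij
  · rw [ha.coxeterMatrix_eq_two_iff.2 h]
    simp only [pow_succ, pow_zero, one_mul, LinearEquiv.mul_apply, LinearEquiv.coe_one, id_eq,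
      simpleReflection_apply, map_sub, map_smul, simpleCoroot_single, ha.diag,
      ha.symm j i, h]
    module
  · rw [ha.coxeterMatrix_eq_three_iff.2 h]
    simp only [pow_succ, pow_zero, one_mul, LinearEquiv.mul_apply, LinearEquiv.coe_one, id_eq,
      simpleReflection_apply, map_sub, map_smul, simpleCoroot_single, ha.diag,
      ha.symm j i, h]
    module

theorem coe_simpleReflection (ha : IsSimplyLacedCartan a) (i : Fin n) :
    ⇑(ha.simpleReflection i) = sRefl a i :=
  funext fun v => (ha.simpleReflection_apply i v).trans (sRefl_apply a i v).symm

/-- The Weyl group of `a`, defined by its Coxeter presentation. -/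
abbrev weylSystem (ha : IsSimplyLacedCartan a) :
    CoxeterSystem ha.coxeterMatrix ha.coxeterMatrix.Group :=
  ha.coxeterMatrix.toCoxeterSystem

/-- The action of the Weyl group on the root space. -/
instance weylAction (ha : IsSimplyLacedCartan a) :
    DistribMulAction ha.coxeterMatrix.Group (Fin n → ℚ) :=
  .compHom _ (ha.weylSystem.lift ⟨_, ha.isLiftable_simpleReflection⟩)

theorem simple_smul (ha : IsSimplyLacedCartan a) (i : Fin n) (v : Fin n → ℚ) :
    ha.weylSystem.simple i • v = sRefl a i v := by
  rw [← ha.coe_simpleReflection]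
  exact congrArg (· v) (ha.weylSystem.lift_apply_simple ha.isLiftable_simpleReflection i)

theorem wordProd_smul (ha : IsSimplyLacedCartan a) (l : List (Fin n)) (v : Fin n → ℚ) :
    ha.weylSystem.wordProd l • v = wProd a l v := by
  induction l with
  | nil => exact one_smul _ v
  | cons i l ih =>
    rw [ha.weylSystem.wordProd_cons, mul_smul, simple_smul, ih]
    rfl

theorem isReduced_of_isReducedList (ha : IsSimplyLacedCartan a) {l : List (Fin n)}
    (hl : IsReducedList a l) : ha.weylSystem.IsReduced l := by
  obtain ⟨l', hl', hprod⟩ := ha.weylSystem.exists_isReduced (ha.weylSystem.wordProd l)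
  refine (ha.weylSystem.length_wordProd_le l).antisymm ?_
  rw [hprod, hl'.eq]
  refine hl l' (funext fun v => ?_)
  rw [← ha.wordProd_smul, ← ha.wordProd_smul, hprod]

theorem isSimplyLacedRoots (ha : IsSimplyLacedCartan a) :
    IsSimplyLacedRoots ha.weylSystem fun i => (Pi.single i 1 : Fin n → ℚ) where
  two_or_three i j hij :=
    (ha.offdiag i j hij).imp ha.coxeterMatrix_eq_two_iff.2 ha.coxeterMatrix_eq_three_iff.2
  pos i := Pi.single_pos.2 one_pos
  smul_self i := by
    rw [simple_smul, sRefl_apply, simpleCoroot_single, ha.diag]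
    module
  smul_of_two i j hij := by
    rw [simple_smul, sRefl_apply, simpleCoroot_single, ha.coxeterMatrix_eq_two_iff.1 hij,
      Int.cast_zero, zero_smul, sub_zero]
  smul_of_three i j hij := by
    rw [simple_smul, sRefl_apply, simpleCoroot_single, ha.coxeterMatrix_eq_three_iff.1 hij]
    module

end IsSimplyLacedCartan

end Cartan

/-! ### The piecewise-linear maps -/

/-- The map on labels attached to a 3-move. -/
def tropicalBraid : ℤ × ℤ × ℤ → ℤ × ℤ × ℤ :=
  fun (x, y, z) => (max z (y - x), x + z, min x (y - z))

theorem tropicalBraid_involutive : Function.Involutive tropicalBraid := by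
  rintro ⟨x, y, z⟩
  ext <;> simp only [tropicalBraid] <;> omega

theorem isTetrahedral_tropicalBraid : LabelledWord.IsTetrahedral tropicalBraid := by
  intro a b c d e f
  simp only [tropicalBraid, Prod.mk.injEq]
  refine ⟨?_, ?_, ?_, ?_, ?_, ?_⟩ <;> omega

section Moves

variable {B X : Type*} {n k : ℕ} {a : Fin n → Fin n → ℤ}

namespace LabelledWord

/-- The word `w` with the label `x q` at position `q`. -/
def ofFn (w : Fin k → B) (x : Fin k → X) : LabelledWord B X := List.ofFn fun q => (w q, x q)

theorem ofFn_succ (w : Fin (k + 1) → B) (x : Fin (k + 1) → X) :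
    ofFn w x = (w 0, x 0) :: ofFn (Fin.tail w) (Fin.tail x) :=
  List.ofFn_succ

theorem word_ofFn (w : Fin k → B) (x : Fin k → X) : (ofFn w x).word = List.ofFn w :=
  List.map_ofFn

theorem ofFn_right_injective (w : Fin k → B) :
    Function.Injective (ofFn w : (Fin k → X) → LabelledWord B X) := fun _ _ hxy =>
  funext fun q => congrArg Prod.snd (congrFun (List.ofFn_injective hxy) q)

end LabelledWord

/-- The same move, one position further to the right. -/
def BMove.succ : BMove → BMove
  | .two p => .two (p + 1)
  | .three p => .three (p + 1)

theorem moveWord_succ (w : Fin (k + 1) → Fin n) (m : BMove) :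
    moveWord w m.succ = Fin.cons (w 0) (moveWord (Fin.tail w) m) := by
  refine funext (Fin.cases ?_ fun q => ?_) <;>
    cases m <;> simp [BMove.succ, moveWord, Fin.tail]

theorem moveZ_succ (x : Fin (k + 1) → ℤ) (m : BMove) :
    moveZ x m.succ = Fin.cons (x 0) (moveZ (Fin.tail x) m) := by
  cases m with
  | two p => refine funext (Fin.cases ?_ fun q => ?_) <;> simp [BMove.succ, moveZ, Fin.tail]
  | three p =>
    by_cases hp : p + 2 < k
    · have hp' : p + 1 + 2 ≤ k := hp
      refine funext (Fin.cases ?_ fun q => ?_) <;> simp [BMove.succ, moveZ, Fin.tail, hp, hp']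
    · have hp' : ¬p + 1 + 2 < k + 1 := by omega
      simp only [BMove.succ, moveZ, hp, hp', dif_neg, not_false_eq_true, Fin.cons_self_tail]

namespace ValidMove

open LabelledWord

theorem tail {w : Fin (k + 1) → Fin n} {m : BMove} (h : ValidMove a w m.succ) :
    ValidMove a (Fin.tail w) m := by
  cases m <;> exact ⟨Nat.lt_of_succ_lt_succ h.1, h.2⟩

theorem move_of_two_zero (ha : IsSimplyLacedCartan a) {w : Fin k → Fin n}
    (h : ValidMove a w (.two 0)) (x : Fin k → ℤ) :
    Move ha.coxeterMatrix tropicalBraid (ofFn w x)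
      (ofFn (moveWord w (.two 0)) (moveZ x (.two 0))) := by
  obtain ⟨hk, hw, -⟩ := h
  obtain ⟨k, rfl⟩ := Nat.exists_eq_add_of_le' hk
  simp only [ofFn_succ]
  exact .head (.two _ (ha.coxeterMatrix_eq_two_iff.2 hw))

theorem move_of_three_zero (ha : IsSimplyLacedCartan a) {w : Fin k → Fin n}
    (h : ValidMove a w (.three 0)) (x : Fin k → ℤ) :
    Move ha.coxeterMatrix tropicalBraid (ofFn w x)
      (ofFn (moveWord w (.three 0)) (moveZ x (.three 0))) := by
  obtain ⟨hk, h02, hw, -⟩ := h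
  obtain ⟨k, rfl⟩ := Nat.exists_eq_add_of_le' hk
  have h20 : Fin.tail (Fin.tail w) 0 = w 0 := h02.symm
  have hT : tropicalBraid (x 0, x 1, x ⟨2, hk⟩) =
      (moveZ x (.three 0) 0, moveZ x (.three 0) 1, moveZ x (.three 0) ⟨2, hk⟩) := by
    simp [tropicalBraid, moveZ]
  have hx : Fin.tail (Fin.tail (Fin.tail (moveZ x (.three 0)))) =
      Fin.tail (Fin.tail (Fin.tail x)) := by
    funext q
    simp [moveZ, Fin.tail]
  simp only [ofFn_succ, h20, hx]
  exact .head (.three _ (ha.coxeterMatrix_eq_three_iff.2 hw) hT)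

theorem move_of_succ (ha : IsSimplyLacedCartan a) {m : BMove}
    (hm : ∀ {k : ℕ} {w : Fin k → Fin n} (x : Fin k → ℤ), ValidMove a w m →
      Move ha.coxeterMatrix tropicalBraid (ofFn w x) (ofFn (moveWord w m) (moveZ x m)))
    {w : Fin k → Fin n} (h : ValidMove a w m.succ) (x : Fin k → ℤ) :
    Move ha.coxeterMatrix tropicalBraid (ofFn w x)
      (ofFn (moveWord w m.succ) (moveZ x m.succ)) := by
  cases k with
  | zero => cases m <;> exact absurd h.1 (Nat.not_lt_zero _)
  | succ k =>
    rw [moveWord_succ, moveZ_succ, ofFn_succ, ofFn_succ]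
    exact .cons _ (hm _ h.tail)

theorem move (ha : IsSimplyLacedCartan a) {m : BMove} {w : Fin k → Fin n} (h : ValidMove a w m)
    (x : Fin k → ℤ) :
    Move ha.coxeterMatrix tropicalBraid (ofFn w x) (ofFn (moveWord w m) (moveZ x m)) := by
  cases m with
  | two p =>
    induction p generalizing k with
    | zero => exact h.move_of_two_zero ha x
    | succ p ih => exact move_of_succ (m := .two p) ha ih h x
  | three p =>
    induction p generalizing k with
    | zero => exact h.move_of_three_zero ha x
    | succ p ih => exact move_of_succ (m := .three p) ha ih h x

end ValidMove

theorem ValidSeq.conn (ha : IsSimplyLacedCartan a) {w : Fin k → Fin n} {ms : List BMove}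
    (h : ValidSeq a w ms) (x : Fin k → ℤ) :
    LabelledWord.Conn ha.coxeterMatrix tropicalBraid (.ofFn w x)
      (.ofFn (wordAfter w ms) (zAfter x ms)) := by
  induction h generalizing x with
  | nil w => exact .refl
  | cons w m ms hm _ ih => exact .head (hm.move ha x) (ih (moveZ x m))

end Moves

theorem moves_loop_identity_general {n k : ℕ} {a : Fin n → Fin n → ℤ}
    (ha : IsSimplyLacedCartan a) (ι : Fin k → Fin n) (hred : IsReducedList a (List.ofFn ι))
    (ms : List BMove) (hval : ValidSeq a ι ms) (hclosed : wordAfter ι ms = ι) :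
    ∀ x : Fin k → ℤ, zAfter x ms = x := by
  intro x
  have hconn := hval.conn ha x
  rw [hclosed] at hconn
  have hι : ha.weylSystem.IsReduced (LabelledWord.ofFn ι x).word := by
    rw [LabelledWord.word_ofFn]
    exact ha.isReduced_of_isReducedList hred
  have heq := LabelledWord.eq_of_conn ha.isSimplyLacedRoots tropicalBraid_involutive
    isTetrahedral_tropicalBraid hι hconn (by rw [LabelledWord.word_ofFn, LabelledWord.word_ofFn])
  exact (LabelledWord.ofFn_right_injective ι heq).symm

theorem SimpleCartanMatrix.isSimplyLacedCartan {n : ℕ} (C : SimpleCartanMatrix n)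
    (hsl : ∀ i j, i ≠ j → C.a i j = 0 ∨ C.a i j = -1) : IsSimplyLacedCartan C.a where
  diag := C.diag
  symm i j := by
    obtain rfl | hij := eq_or_ne i j
    · rfl
    · have := hsl i j hij
      have := hsl j i hij.symm
      have := C.zero_symm i j
      have := C.zero_symm j i
      omega
  offdiag := hsl

/-- For a simply-laced finite-type Cartan matrix and a reduced
word `ι`, any finite sequence of 2-moves and 3-moves transforming `ι` back into
itself induces the identity map of `ℤ^k`. -/
theorem moves_loop_identity {n k : ℕ} (C : SimpleCartanMatrix n)
    (hsl : ∀ i j, i ≠ j → C.a i j = 0 ∨ C.a i j = -1)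
    (ι : Fin k → Fin n) (hred : IsReducedList C.a (List.ofFn ι))
    (ms : List BMove) (hval : ValidSeq C.a ι ms) (hclosed : wordAfter ι ms = ι) :
    ∀ x : Fin k → ℤ, zAfter x ms = x :=
  moves_loop_identity_general (C.isSimplyLacedCartan hsl) ι hred ms hval hclosed
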